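/- Fix an integer n ≥ 1 and constants α, γ ≥ 0. Let μ be a strictly positive probability measure on Ω_n = {0,1}^n and let L₋ f(η) = [α(1−η₁) + γη₁][f(η^1) − f(η)]. Then Σ_{η ∈ Ω_n} μ(η) (L₋[log μ])(η) ≤ −Σ_{η ∈ Ω_n} [α(1−η₁) + γη₁] (√(μ(η^1)) − √(μ(η)))² + (α−γ) Σ_{η ∈ Ω_n} (2η₁ − 1) μ(η). (The boundary entropy-production estimate in the proof of Lemma 3.3.) -/

import Mathlib

open Finset

/-- Real value of an occupation variable. -/
def b2r (b : Bool) : ℝ := if b then 1 else 0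

/-- Flip the coordinate `i` of a configuration. -/
def flipAt {n : ℕ} (η : Fin n → Bool) (i : Fin n) : Fin n → Bool :=
  Function.update η i (!η i)

/-- Generator of the left reservoir, acting on the first coordinate:
`L₋ f(η) = [α(1−η₁) + γη₁][f(η^1) − f(η)]`. -/
def LmB {n : ℕ} (α γ : ℝ) (i0 : Fin n) (f : (Fin n → Bool) → ℝ) (η : Fin n → Bool) : ℝ :=
  (α * (1 - b2r (η i0)) + γ * b2r (η i0)) * (f (flipAt η i0) - f η)

/-!
The inequality `log t ≤ t - 1` at `t = √(y / x)` gives `x (log y - log x) ≤ 2 √x (√y - √x)`, which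
bounds the entropy production `∑ μ L(log μ)` by `2 ∑ √μ L(√μ)`. The carré du champ identity
`2 f L f = L(f²) - Γ(f)` at `f = √μ` turns this into minus the Dirichlet form plus `∑ L μ`. A change
of variables along the jump rewrites `∑ L μ` as the difference of the incoming and outgoing
rates integrated against `μ`; for a flip at a reservoir site it is `(α - γ) (2 η₁ - 1)`.
-/

theorem mul_log_sub_log_le_two_mul_sqrt {x y : ℝ} (hx : 0 < x) (hy : 0 < y) :
    x * (Real.log y - Real.log x) ≤ 2 * (√x * (√y - √x)) := by
  have hsx : 0 < √x := Real.sqrt_pos.2 hx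
  have hlog : Real.log √y - Real.log √x ≤ √y / √x - 1 := by
    rw [← Real.log_div (Real.sqrt_ne_zero'.2 hy) hsx.ne']
    exact Real.log_le_sub_one_of_pos (div_pos (Real.sqrt_pos.2 hy) hsx)
  calc x * (Real.log y - Real.log x)
      = 2 * x * (Real.log √y - Real.log √x) := by
        rw [Real.log_sqrt hx.le, Real.log_sqrt hy.le]
        ring
    _ ≤ 2 * x * (√y / √x - 1) := by gcongr
    _ = 2 * (√x ^ 2 * (√y / √x - 1)) := by rw [Real.sq_sqrt hx.le, mul_assoc]
    _ = 2 * (√x * (√y - √x)) := by field_simp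

section JumpGenerator

variable {Ω : Type*}

/-- The generator of the Markov jump process on `Ω` that moves from `η` to `σ η` at rate `r η`.
The left reservoir `LmB` is the case of a coordinate flip `σ`. -/
def jumpGenerator (r : Ω → ℝ) (σ : Ω → Ω) (f : Ω → ℝ) (η : Ω) : ℝ :=
  r η * (f (σ η) - f η)

theorem jumpGenerator_sq (r : Ω → ℝ) (σ : Ω → Ω) (f : Ω → ℝ) (η : Ω) :
    jumpGenerator r σ (fun ζ => f ζ ^ 2) η
      = 2 * (f η * jumpGenerator r σ f η) + r η * (f (σ η) - f η) ^ 2 := by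
  unfold jumpGenerator
  ring

theorem mul_jumpGenerator_log_le {r : Ω → ℝ} (σ : Ω → Ω) {μ : Ω → ℝ} {η : Ω}
    (hr : 0 ≤ r η) (hη : 0 < μ η) (hση : 0 < μ (σ η)) :
    μ η * jumpGenerator r σ (fun ζ => Real.log (μ ζ)) η
      ≤ 2 * (√(μ η) * jumpGenerator r σ (fun ζ => √(μ ζ)) η) := by
  unfold jumpGenerator
  linarith [mul_le_mul_of_nonneg_left (mul_log_sub_log_le_two_mul_sqrt hη hση) hr]

variable [Fintype Ω]

theorem sum_jumpGenerator (r : Ω → ℝ) (σ : Equiv.Perm Ω) (f : Ω → ℝ) :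
    ∑ η, jumpGenerator r σ f η = ∑ η, (r (σ.symm η) - r η) * f η := by
  have hshift : ∑ η, r η * f (σ η) = ∑ η, r (σ.symm η) * f η := by
    simpa only [Equiv.symm_apply_apply] using
      Equiv.sum_comp σ (fun η => r (σ.symm η) * f η)
  simp only [jumpGenerator, mul_sub, sub_mul, sum_sub_distrib, hshift]

theorem two_mul_sum_mul_jumpGenerator (r : Ω → ℝ) (σ : Equiv.Perm Ω) (f : Ω → ℝ) :
    2 * ∑ η, f η * jumpGenerator r σ f η
      = -(∑ η, r η * (f (σ η) - f η) ^ 2) + ∑ η, (r (σ.symm η) - r η) * f η ^ 2 := by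
  rw [← sum_jumpGenerator r σ (fun η => f η ^ 2)]
  simp only [jumpGenerator_sq, sum_add_distrib, mul_sum, neg_add_cancel_comm_assoc]

theorem stmt16_general {r : Ω → ℝ} (hr : ∀ η, 0 ≤ r η) (σ : Equiv.Perm Ω) {μ : Ω → ℝ}
    (hpos : ∀ η, 0 < μ η) :
    ∑ η, μ η * jumpGenerator r σ (fun ζ => Real.log (μ ζ)) η
      ≤ -(∑ η, r η * (√(μ (σ η)) - √(μ η)) ^ 2) + ∑ η, (r (σ.symm η) - r η) * μ η :=
  calc ∑ η, μ η * jumpGenerator r σ (fun ζ => Real.log (μ ζ)) η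
      ≤ 2 * ∑ η, √(μ η) * jumpGenerator r σ (fun ζ => √(μ ζ)) η := by
        rw [mul_sum]
        exact sum_le_sum fun η _ => mul_jumpGenerator_log_le σ (hr η) (hpos η) (hpos (σ η))
    _ = -(∑ η, r η * (√(μ (σ η)) - √(μ η)) ^ 2) + ∑ η, (r (σ.symm η) - r η) * μ η := by
        simp only [two_mul_sum_mul_jumpGenerator, Real.sq_sqrt (hpos _).le]

end JumpGenerator

section Reservoir

/-- The rate at which a reservoir flips a site with occupation `b`: it creates a particle at an
empty site at rate `α` and removes one from an occupied site at rate `γ`. -/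
def reservoirRate (α γ : ℝ) (b : Bool) : ℝ :=
  α * (1 - b2r b) + γ * b2r b

theorem reservoirRate_nonneg {α γ : ℝ} (hα : 0 ≤ α) (hγ : 0 ≤ γ) (b : Bool) :
    0 ≤ reservoirRate α γ b := by
  cases b <;> simpa [reservoirRate, b2r]

theorem b2r_not (b : Bool) : b2r (!b) = 1 - b2r b := by
  cases b <;> simp [b2r]

theorem reservoirRate_not_sub (α γ : ℝ) (b : Bool) :
    reservoirRate α γ (!b) - reservoirRate α γ b = (α - γ) * (2 * b2r b - 1) := by
  rw [reservoirRate, reservoirRate, b2r_not]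
  ring

variable {n : ℕ}

theorem flipAt_apply_self (η : Fin n → Bool) (i : Fin n) : flipAt η i i = !η i :=
  Function.update_self i _ η

theorem flipAt_involutive (i : Fin n) : Function.Involutive (fun η => flipAt η i) := by
  intro η
  simp [flipAt]

/-- The coordinate flip `flipAt · i` as a permutation of the configuration space, along which the
reservoir at site `i` is a `jumpGenerator`. -/
def flipPerm (i : Fin n) : Equiv.Perm (Fin n → Bool) :=
  (flipAt_involutive i).toPerm

theorem LmB_eq_jumpGenerator (α γ : ℝ) (i : Fin n) (f : (Fin n → Bool) → ℝ) :
    LmB α γ i f = jumpGenerator (fun η => reservoirRate α γ (η i)) (flipPerm i) f :=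
  rfl

theorem sum_reservoirRate_flipPerm_sub (α γ : ℝ) (i : Fin n) (μ : (Fin n → Bool) → ℝ) :
    ∑ η, (reservoirRate α γ ((flipPerm i).symm η i) - reservoirRate α γ (η i)) * μ η
      = (α - γ) * ∑ η, (2 * b2r (η i) - 1) * μ η := by
  have hflip (η : Fin n → Bool) : (flipPerm i).symm η i = !η i := flipAt_apply_self η i
  simp only [hflip, reservoirRate_not_sub, mul_sum, mul_assoc]

end Reservoir

/-- The boundary entropy-production estimate in the proof of Lemma 3.3:
`Σ_η μ(η) L₋[log μ](η) ≤ −Σ_η [α(1−η₁)+γη₁](√μ(η^1) − √μ(η))²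
  + (α−γ) Σ_η (2η₁−1) μ(η)`. -/
theorem stmt16 (n : ℕ) (hn : 1 ≤ n) (α γ : ℝ) (hα : 0 ≤ α) (hγ : 0 ≤ γ)
    (μ : (Fin n → Bool) → ℝ) (hpos : ∀ η, 0 < μ η)
    (hsum : ∑ η : Fin n → Bool, μ η = 1) :
    ∑ η : Fin n → Bool, μ η * LmB α γ ⟨0, by omega⟩ (fun ζ => Real.log (μ ζ)) η
      ≤ -(∑ η : Fin n → Bool,
            (α * (1 - b2r (η ⟨0, by omega⟩)) + γ * b2r (η ⟨0, by omega⟩)) *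
              (Real.sqrt (μ (flipAt η ⟨0, by omega⟩)) - Real.sqrt (μ η))^2)
        + (α - γ) * ∑ η : Fin n → Bool, (2 * b2r (η ⟨0, by omega⟩) - 1) * μ η := by
  rw [LmB_eq_jumpGenerator, ← sum_reservoirRate_flipPerm_sub]
  exact stmt16_general (fun _ => reservoirRate_nonneg hα hγ _) (flipPerm _) hpos
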